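/- Let c₁, c₂, c₃ ∈ 𝔽_p^* and set δ = Σ_{c ∈ 𝔽_p^*} Σ_{x ∈ 𝔽_p^*} χ̄₁(x(c−c₁)) Σ_{y ∈ 𝔽_p^*} χ̄₁(−y c₂) Σ_{z ∈ 𝔽_p^*} χ̄₁(−z²c/(4y) − z c₃). Then δ = p + 1 if c₃² − c₁c₂ = 0; δ = p² + p + 1 if η̄(c₃² − c₁c₂) = 1; and δ = −p² + p + 1 if η̄(c₃² − c₁c₂) = −1. -/

import Mathlib

open Finset
open scoped Classical

noncomputable section

/-- `ζ_p = exp(2πi/p)`. -/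
def zeta (p : ℕ) : ℂ := Complex.exp (2 * Real.pi * Complex.I / p)

/-- The canonical additive character of `ℤ/p`: `χ̄₁(c) = ζ_p^c`. -/
def chiBar (p : ℕ) (c : ZMod p) : ℂ := zeta p ^ c.val

/-- The quadratic character of `(ℤ/p)^*`, extended by `η̄(0) = 0`. -/
def etaBar (p : ℕ) (c : ZMod p) : ℂ :=
  if c = 0 then 0 else if IsSquare c then 1 else -1

/-- The quadratic character of `F^*`, extended by `η(0) = 0`. -/
def etaQ (F : Type) [Field F] (x : F) : ℂ :=
  if x = 0 then 0 else if IsSquare x then 1 else -1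

/-- The absolute trace map from `F` to `ℤ/p`. -/
def Trq (p : ℕ) (F : Type) [Field F] [Algebra (ZMod p) F] (x : F) : ZMod p :=
  Algebra.trace (ZMod p) F x

/-- The canonical additive character of `F`: `χ₁(x) = ζ_p^{Tr x}`. -/
def chiQ (p : ℕ) (F : Type) [Field F] [Algebra (ZMod p) F] (x : F) : ℂ :=
  chiBar p (Trq p F x)

/-- The quadratic Gauss sum `G` over `F`. -/
def GaussQ (p : ℕ) (F : Type) [Field F] [Fintype F] [Algebra (ZMod p) F] : ℂ :=
  ∑ x ∈ univ.filter (fun x : F => x ≠ 0), etaQ F x * chiQ p F x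

/-- The quadratic Gauss sum `Ḡ` over `ℤ/p`. -/
def GaussP (p : ℕ) [NeZero p] : ℂ :=
  ∑ y ∈ univ.filter (fun y : ZMod p => y ≠ 0), etaBar p y * chiBar p y

lemma chiBar_eq (p : ℕ) [Fact (Nat.Prime p)] (c : ZMod p) : chiBar p c = ZMod.stdAddChar c := by
  rw [ZMod.stdAddChar_apply, ZMod.toCircle_apply, chiBar, zeta, ← Complex.exp_nat_mul]
  congr 1
  ring

lemma chiBar_add (p : ℕ) [Fact (Nat.Prime p)] (a b : ZMod p) :
    chiBar p (a + b) = chiBar p a * chiBar p b := by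
  simp only [chiBar_eq, AddChar.map_add_eq_mul]

lemma K_sum (p : ℕ) [Fact (Nat.Prime p)] (b : ZMod p) :
    ∑ x ∈ univ.filter (fun x : ZMod p => x ≠ 0), chiBar p (x * b) =
      (if b = 0 then (p : ℂ) else 0) - 1 := by
  have h := AddChar.sum_mulShift b (ZMod.isPrimitive_stdAddChar p)
  rw [Finset.filter_ne' univ (0 : ZMod p), ← Finset.sum_erase_add _ _ (Finset.mem_univ (0 : ZMod p))] at *
  simp only [chiBar_eq]
  rw [zero_mul, AddChar.map_zero_eq_one, ZMod.card] at h
  rw [eq_sub_iff_add_eq, h]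
  split_ifs <;> simp

def Sc (p : ℕ) [Fact (Nat.Prime p)] (c₂ c₃ c : ZMod p) : ℂ :=
  ∑ y ∈ univ.filter (fun y : ZMod p => y ≠ 0), chiBar p (-(y * c₂)) *
        ∑ z ∈ univ.filter (fun z : ZMod p => z ≠ 0), chiBar p (-(z ^ 2 * c) / (4 * y) - z * c₃)

lemma four_ne (p : ℕ) [Fact (Nat.Prime p)] (hp : Odd p) : (2 : ZMod p) ≠ 0 := by
  intro h
  have h2 : ((2 : ℕ) : ZMod p) = 0 := by exact_mod_cast h
  rw [ZMod.natCast_eq_zero_iff] at h2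
  have := (Nat.prime_dvd_prime_iff_eq (Fact.out : p.Prime) Nat.prime_two).1 h2
  subst this
  exact absurd hp (by decide)

lemma Sc_total (p : ℕ) [Fact (Nat.Prime p)] (hp : Odd p) (c₂ c₃ : ZMod p)
    (hc₂ : c₂ ≠ 0) (hc₃ : c₃ ≠ 0) :
    ∑ c ∈ univ.filter (fun c : ZMod p => c ≠ 0), Sc p c₂ c₃ c = -1 := by
  have h2 := four_ne p hp
  have h4 : (4 : ZMod p) ≠ 0 := by
    have : (4 : ZMod p) = 2 * 2 := by norm_num
    rw [this]; exact mul_ne_zero h2 h2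
  unfold Sc
  rw [Finset.sum_comm]
  have : ∀ y ∈ univ.filter (fun y : ZMod p => y ≠ 0),
      ∑ c ∈ univ.filter (fun c : ZMod p => c ≠ 0), chiBar p (-(y * c₂)) *
        ∑ z ∈ univ.filter (fun z : ZMod p => z ≠ 0), chiBar p (-(z ^ 2 * c) / (4 * y) - z * c₃)
      = chiBar p (y * (-c₂)) := by
    intro y hy
    have hy : y ≠ 0 := by simpa using hy
    rw [← Finset.mul_sum, Finset.sum_comm]
    have h1 : ∀ z ∈ univ.filter (fun z : ZMod p => z ≠ 0),
        ∑ c ∈ univ.filter (fun c : ZMod p => c ≠ 0), chiBar p (-(z ^ 2 * c) / (4 * y) - z * c₃)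
        = - chiBar p (z * (-c₃)) := by
      intro z hz
      have hz : z ≠ 0 := by simpa using hz
      have h3 : ∀ c : ZMod p, chiBar p (-(z ^ 2 * c) / (4 * y) - z * c₃)
          = chiBar p (c * (-(z ^ 2) / (4 * y))) * chiBar p (z * (-c₃)) := by
        intro c
        rw [← chiBar_add]
        congr 1
        ring
      simp only [h3]
      rw [← Finset.sum_mul, K_sum, if_neg]
      · ring
      · exact div_ne_zero (neg_ne_zero.2 (pow_ne_zero _ hz)) (mul_ne_zero h4 hy)
    rw [Finset.sum_congr rfl h1, Finset.sum_neg_distrib, K_sum, if_neg (neg_ne_zero.2 hc₃)]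
    rw [mul_neg y]
    ring
  rw [Finset.sum_congr rfl this, K_sum, if_neg (neg_ne_zero.2 hc₂)]
  ring

lemma Sc_eval (p : ℕ) [Fact (Nat.Prime p)] (hp : Odd p) (c₁ c₂ c₃ : ZMod p)
    (hc₁ : c₁ ≠ 0) (hc₂ : c₂ ≠ 0) :
    Sc p c₂ c₃ c₁ = p * ((univ.filter (fun w : ZMod p => w ^ 2 = c₃ ^ 2 - c₁ * c₂)).card : ℂ)
      - (p - 1) := by
  have h2 := four_ne p hp
  have h4e : (4 : ZMod p) = 2 * 2 := by norm_num
  have h4 : (4 : ZMod p) ≠ 0 := by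
    rw [h4e]; exact mul_ne_zero h2 h2
  -- substitute z = y * w
  have hS : Sc p c₂ c₃ c₁ = ∑ y ∈ univ.filter (fun y : ZMod p => y ≠ 0),
      ∑ w ∈ univ.filter (fun w : ZMod p => w ≠ 0),
        chiBar p (y * (-c₂ - w ^ 2 * c₁ / 4 - w * c₃)) := by
    unfold Sc
    refine Finset.sum_congr rfl fun y hy => ?_
    have hy : y ≠ 0 := by simpa using hy
    rw [Finset.mul_sum]
    refine (Finset.sum_bij' (fun w _ => y * w) (fun z _ => z / y) ?_ ?_ ?_ ?_ ?_).symm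
    · intro w hw
      simpa [hy] using hw
    · intro z hz
      simpa [hy] using hz
    · intro w _
      field_simp
    · intro z _
      field_simp
    · intro w _
      rw [← chiBar_add]
      congr 1
      field_simp
      ring
  rw [hS, Finset.sum_comm]
  simp only [K_sum]
  rw [Finset.sum_sub_distrib, ← Finset.sum_filter, Finset.sum_const, Finset.sum_const]
  have hc : ((univ.filter (fun w : ZMod p => w ≠ 0)).card : ℂ) = p - 1 := by
    rw [Finset.filter_ne' univ (0 : ZMod p), Finset.card_erase_of_mem (Finset.mem_univ _),
      Finset.card_univ, ZMod.card, Nat.cast_sub (Fact.out : p.Prime).one_le]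
    simp
  have hN : ((univ.filter (fun w : ZMod p => w ≠ 0)).filter
      (fun w => -c₂ - w ^ 2 * c₁ / 4 - w * c₃ = 0)).card =
      (univ.filter (fun w : ZMod p => w ^ 2 = c₃ ^ 2 - c₁ * c₂)).card := by
    refine Finset.card_bij' (fun w _ => c₁ * w / 2 + c₃) (fun v _ => 2 * (v - c₃) / c₁) ?_ ?_ ?_ ?_
    · intro w hw
      have hw := (by simpa using hw : w ≠ 0 ∧ -c₂ - w ^ 2 * c₁ / 4 - w * c₃ = 0).2
      simp only [Finset.mem_filter, Finset.mem_univ, true_and]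
      have e : (c₁ * w / 2 + c₃) ^ 2 - (c₃ ^ 2 - c₁ * c₂)
          = -c₁ * (-c₂ - w ^ 2 * c₁ / 4 - w * c₃) := by
        rw [h4e]
        field_simp
        ring
      rw [hw, mul_zero] at e
      exact sub_eq_zero.1 e
    · intro v hv
      have hv := (by simpa using hv : v ^ 2 = c₃ ^ 2 - c₁ * c₂)
      have e : -c₂ - (2 * (v - c₃) / c₁) ^ 2 * c₁ / 4 - (2 * (v - c₃) / c₁) * c₃ = 0 := by
        have e2 : -c₁ * (-c₂ - (2 * (v - c₃) / c₁) ^ 2 * c₁ / 4 - (2 * (v - c₃) / c₁) * c₃)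
            = v ^ 2 - (c₃ ^ 2 - c₁ * c₂) := by
          rw [h4e]
          field_simp
          ring
        rw [hv, sub_self] at e2
        exact (mul_eq_zero.1 e2).resolve_left (neg_ne_zero.2 hc₁)
      simp only [Finset.mem_filter, Finset.mem_univ, true_and]
      refine ⟨fun h0 => ?_, e⟩
      rw [h0] at e
      apply hc₂
      simpa using e
    · intro w _
      field_simp
      ring
    · intro v _
      field_simp
      ring
  rw [hN]
  simp only [nsmul_eq_mul, mul_one, hc]
  ring

lemma delta_Sc (p : ℕ) [Fact (Nat.Prime p)] (hp : Odd p)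
    (c₁ c₂ c₃ : ZMod p) (hc₁ : c₁ ≠ 0) (hc₂ : c₂ ≠ 0) (hc₃ : c₃ ≠ 0) :
    (∑ c ∈ univ.filter (fun c : ZMod p => c ≠ 0), ∑ x ∈ univ.filter (fun x : ZMod p => x ≠ 0), chiBar p (x * (c - c₁)) *
      ∑ y ∈ univ.filter (fun y : ZMod p => y ≠ 0), chiBar p (-(y * c₂)) *
        ∑ z ∈ univ.filter (fun z : ZMod p => z ≠ 0), chiBar p (-(z ^ 2 * c) / (4 * y) - z * c₃))
      = p * Sc p c₂ c₃ c₁ + 1 := by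
  have : ∀ c : ZMod p, ∑ x ∈ univ.filter (fun x : ZMod p => x ≠ 0), chiBar p (x * (c - c₁)) *
      ∑ y ∈ univ.filter (fun y : ZMod p => y ≠ 0), chiBar p (-(y * c₂)) *
        ∑ z ∈ univ.filter (fun z : ZMod p => z ≠ 0), chiBar p (-(z ^ 2 * c) / (4 * y) - z * c₃)
      = (if c = c₁ then p * Sc p c₂ c₃ c else 0) - Sc p c₂ c₃ c := by
    intro c
    rw [← Finset.sum_mul, K_sum]
    change _ * Sc p c₂ c₃ c = _
    simp only [sub_eq_zero]
    split_ifs <;> ring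
  simp only [this]
  rw [Finset.sum_sub_distrib, Sc_total p hp c₂ c₃ hc₂ hc₃, Finset.sum_ite_eq', if_pos (by simpa using hc₁)]
  ring

theorem delta_eval (p : ℕ) [Fact (Nat.Prime p)] (hp : Odd p)
    (c₁ c₂ c₃ : ZMod p) (hc₁ : c₁ ≠ 0) (hc₂ : c₂ ≠ 0) (hc₃ : c₃ ≠ 0) :
    (c₃ ^ 2 - c₁ * c₂ = 0 →
      (∑ c ∈ univ.filter (fun c : ZMod p => c ≠ 0), ∑ x ∈ univ.filter (fun x : ZMod p => x ≠ 0), chiBar p (x * (c - c₁)) *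
      ∑ y ∈ univ.filter (fun y : ZMod p => y ≠ 0), chiBar p (-(y * c₂)) *
        ∑ z ∈ univ.filter (fun z : ZMod p => z ≠ 0), chiBar p (-(z ^ 2 * c) / (4 * y) - z * c₃)) = (p : ℂ) + 1) ∧
    (etaBar p (c₃ ^ 2 - c₁ * c₂) = 1 →
      (∑ c ∈ univ.filter (fun c : ZMod p => c ≠ 0), ∑ x ∈ univ.filter (fun x : ZMod p => x ≠ 0), chiBar p (x * (c - c₁)) *
      ∑ y ∈ univ.filter (fun y : ZMod p => y ≠ 0), chiBar p (-(y * c₂)) *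
        ∑ z ∈ univ.filter (fun z : ZMod p => z ≠ 0), chiBar p (-(z ^ 2 * c) / (4 * y) - z * c₃)) = (p : ℂ) ^ 2 + (p : ℂ) + 1) ∧
    (etaBar p (c₃ ^ 2 - c₁ * c₂) = -1 →
      (∑ c ∈ univ.filter (fun c : ZMod p => c ≠ 0), ∑ x ∈ univ.filter (fun x : ZMod p => x ≠ 0), chiBar p (x * (c - c₁)) *
      ∑ y ∈ univ.filter (fun y : ZMod p => y ≠ 0), chiBar p (-(y * c₂)) *
        ∑ z ∈ univ.filter (fun z : ZMod p => z ≠ 0), chiBar p (-(z ^ 2 * c) / (4 * y) - z * c₃)) = -((p : ℂ) ^ 2) + (p : ℂ) + 1) := by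
  rw [delta_Sc p hp c₁ c₂ c₃ hc₁ hc₂ hc₃, Sc_eval p hp c₁ c₂ c₃ hc₁ hc₂]
  have h2 := four_ne p hp
  generalize c₃ ^ 2 - c₁ * c₂ = D
  refine ⟨fun h => ?_, fun h => ?_, fun h => ?_⟩
  · have : univ.filter (fun w : ZMod p => w ^ 2 = D) = {0} := by
      ext w
      simp [h]
    rw [this, Finset.card_singleton]
    push_cast
    ring
  · unfold etaBar at h
    split_ifs at h with h0 hs
    · norm_num at h
    · obtain ⟨s, rfl⟩ := hs
      have hs0 : s ≠ 0 := fun h => h0 (by simp [h])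
      have : univ.filter (fun w : ZMod p => w ^ 2 = s * s) = {s, -s} := by
        ext w
        simp [← pow_two, sq_eq_sq_iff_eq_or_eq_neg]
      rw [this, Finset.card_pair]
      · push_cast
        ring
      · intro hh
        have : 2 * s = 0 := by linear_combination hh
        exact (mul_ne_zero h2 hs0) this
    · norm_num at h
  · unfold etaBar at h
    split_ifs at h with h0 hs
    · norm_num at h
    · norm_num at h
    · have : univ.filter (fun w : ZMod p => w ^ 2 = D) = ∅ := by
        ext w
        simp only [Finset.mem_filter, Finset.mem_univ, true_and, Finset.notMem_empty, iff_false]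
        intro hw
        exact hs ⟨w, by rw [← hw, pow_two]⟩
      rw [this, Finset.card_empty]
      push_cast
      ring
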